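/- Let w be a valid chipsplitting outcome whose positive support supp⁺(w) has exactly 4 elements. Then deg(w) ≤ 5, i.e., every (i,j) ∈ supp(w) satisfies i + j ≤ 5. -/

import Mathlib

/-- The splitting-move vector at a grid point `p = (i,j)`:
`δ_{(i+1,j)} + δ_{(i,j+1)} − δ_{(i,j)}`. -/
noncomputable def splitMove (p : ℕ × ℕ) : (ℕ × ℕ) →₀ ℤ :=
  Finsupp.single (p.1 + 1, p.2) 1 + Finsupp.single (p.1, p.2 + 1) 1 - Finsupp.single p 1

/-- A chip configuration is a chipsplitting outcome if it lies in the additive subgroup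
generated by all splitting-move vectors. -/
def IsOutcome (w : (ℕ × ℕ) →₀ ℤ) : Prop :=
  w ∈ AddSubgroup.closure (Set.range splitMove)

/-- A chip configuration is valid if its negative support is contained in `{(0,0)}`. -/
def IsValid (w : (ℕ × ℕ) →₀ ℤ) : Prop :=
  ∀ p : ℕ × ℕ, w p < 0 → p = (0, 0)

/-- Functions annihilating all splitting moves. -/
def Harm (f : ℕ → ℕ → ℚ) : Prop := ∀ i j, f (i + 1) j + f i (j + 1) = f i j

lemma outcome_sum (w : (ℕ × ℕ) →₀ ℤ) (hw : IsOutcome w) (f : ℕ → ℕ → ℚ) (hf : Harm f) :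
    w.sum (fun p c => (c : ℚ) * f p.1 p.2) = 0 := by
  let φ : ((ℕ × ℕ) →₀ ℤ) →+ ℚ :=
    Finsupp.liftAddHom (fun p : ℕ × ℕ => (AddMonoidHom.mulRight (f p.1 p.2)).comp (Int.castAddHom ℚ))
  have hφ : ∀ v : (ℕ × ℕ) →₀ ℤ, φ v = v.sum (fun p c => (c : ℚ) * f p.1 p.2) := by
    intro v; rfl
  rw [← hφ]
  have : AddSubgroup.closure (Set.range splitMove) ≤ φ.ker := by
    rw [AddSubgroup.closure_le]
    rintro _ ⟨p, rfl⟩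
    have := hf p.1 p.2
    have h1 : ∀ q : ℕ × ℕ, φ (Finsupp.single q 1) = f q.1 q.2 := by
      intro q
      rw [hφ, Finsupp.sum_single_index] <;> simp
    simp only [SetLike.mem_coe, AddMonoidHom.mem_ker, splitMove, map_sub, map_add, h1]
    linarith
  exact this hw

def g0 (i _j : ℕ) : ℚ := if i = 0 then 1 else 0
def g1 (i j : ℕ) : ℚ := if i = 0 then -j else if i = 1 then 1 else 0
def g2 (i j : ℕ) : ℚ :=
  if i = 0 then j * (j - 1) / 2 else if i = 1 then -j else if i = 2 then 1 else 0
def g3 (i j : ℕ) : ℚ :=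
  if i = 0 then - (j * (j - 1) * (j - 2) / 6) else if i = 1 then j * (j - 1) / 2
  else if i = 2 then -j else if i = 3 then 1 else 0
def gh (i j : ℕ) : ℚ := (1 / 2) ^ (i + j)

lemma h0 : Harm g0 := by
  intro i j; simp [g0]
lemma h1 : Harm g1 := by
  intro i j
  rcases i with _ | _ | i <;> simp [g1]
lemma h2 : Harm g2 := by
  intro i j
  rcases i with _ | _ | _ | i <;> simp [g2] <;> ring
lemma h3 : Harm g3 := by
  intro i j
  rcases i with _ | _ | _ | _ | i <;> simp [g3] <;> ring
lemma hh : Harm gh := by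
  intro i j; simp only [gh]; ring
lemma harm_swap {f : ℕ → ℕ → ℚ} (hf : Harm f) : Harm (fun i j => f j i) := by
  intro i j
  have := hf j i
  simp only
  linarith

/-- The system for a normalized outcome with four positive points. -/
structure Sys (a b i j k l : ℕ) (Q P R U : ℚ) : Prop where
  hQ : 0 < Q
  hP : 0 < P
  hR : 0 < R
  hU : 0 < U
  eq : ∀ f, Harm f → f 0 0 = Q * f a 0 + P * f 0 b + R * f i j + U * f k l

lemma Sys.swap {a b i j k l : ℕ} {Q P R U : ℚ} (h : Sys a b i j k l Q P R U) :
    Sys a b k l i j Q P U R :=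
  ⟨h.hQ, h.hP, h.hU, h.hR, fun f hf => by rw [h.eq f hf]; ring⟩

lemma Sys.tr {a b i j k l : ℕ} {Q P R U : ℚ} (h : Sys a b i j k l Q P R U) :
    Sys b a j i l k P Q R U :=
  ⟨h.hP, h.hQ, h.hR, h.hU, fun f hf => by have := h.eq _ (harm_swap hf); linarith⟩

/-- Second coefficient of a point on an axis. -/
lemma tri_nonneg (n : ℕ) : (0 : ℚ) ≤ n * (n - 1) / 2 := by
  rcases n with _ | n
  · simp
  · push_cast
    have : ((n : ℚ) + 1) * (n + 1 - 1) / 2 = (n + 1) * n / 2 := by ring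
    rw [this]; positivity
lemma tri_ge (n : ℕ) (hn : 2 ≤ n) : (1 : ℚ) ≤ n * (n - 1) / 2 := by
  have : (2 : ℚ) ≤ n := by exact_mod_cast hn
  nlinarith
lemma tet_nonneg (n : ℕ) : (0 : ℚ) ≤ n * (n - 1) * (n - 2) / 6 := by
  rcases n with _ | _ | n
  · simp
  · simp
  · push_cast
    have : (0 : ℚ) ≤ n := by positivity
    have : ((n : ℚ) + 1 + 1) * (n + 1 + 1 - 1) * (n + 1 + 1 - 2) / 6 = (n + 2) * (n + 1) * n / 6 := by ring
    rw [this]; positivity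
lemma tet_ge (n : ℕ) (hn : 4 ≤ n) : (4 : ℚ) ≤ n * (n - 1) * (n - 2) / 6 := by
  obtain ⟨m, rfl⟩ := Nat.exists_eq_add_of_le hn
  push_cast
  have : (0 : ℚ) ≤ m := by positivity
  have : ((4 : ℚ) + m) * (4 + m - 1) * (4 + m - 2) / 6 = 4 + (26 * m + 9 * m ^ 2 + m ^ 3) / 6 := by ring
  rw [this]
  have : (0 : ℚ) ≤ (26 * m + 9 * m ^ 2 + m ^ 3) / 6 := by positivity
  linarith

lemma g2_zero (a : ℕ) (ha : 1 ≤ a) : g2 a 0 = if a = 2 then 1 else 0 := by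
  rcases a with _ | _ | _ | a
  · omega
  all_goals simp [g2]
lemma g3_zero (a : ℕ) (ha : 1 ≤ a) : g3 a 0 = if a = 3 then 1 else 0 := by
  rcases a with _ | _ | _ | _ | a
  · omega
  all_goals simp [g3]

/-- Explicit equations. -/
lemma Sys.T0 {a b i j k l : ℕ} {Q P R U : ℚ} (h : Sys a b i j k l Q P R U) (ha : 1 ≤ a) :
    1 = P + R * g0 i j + U * g0 k l := by
  have := h.eq g0 h0
  have ha' : a ≠ 0 := by omega
  simpa [g0, ha'] using this
lemma Sys.T1 {a b i j k l : ℕ} {Q P R U : ℚ} (h : Sys a b i j k l Q P R U) (ha : 1 ≤ a) :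
    P * b = Q * (if a = 1 then 1 else 0) + R * g1 i j + U * g1 k l := by
  have := h.eq g1 h1
  have ha' : a ≠ 0 := by omega
  simp only [g1, ha', if_true, if_false] at this ⊢
  push_cast at this
  linarith
lemma Sys.T2 {a b i j k l : ℕ} {Q P R U : ℚ} (h : Sys a b i j k l Q P R U) (ha : 1 ≤ a) :
    0 = P * (b * (b - 1) / 2) + Q * (if a = 2 then 1 else 0) + R * g2 i j + U * g2 k l := by
  have := h.eq g2 h2
  have ha' : a ≠ 0 := by omega
  have ha2 : g2 a 0 = if a = 2 then 1 else 0 := g2_zero a ha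
  have hb2 : g2 0 b = b * (b - 1) / 2 := by simp [g2]
  have h00 : g2 0 0 = 0 := by simp [g2]
  rw [ha2, hb2, h00] at this
  linarith
lemma Sys.T3 {a b i j k l : ℕ} {Q P R U : ℚ} (h : Sys a b i j k l Q P R U) (ha : 1 ≤ a) :
    P * (b * (b - 1) * (b - 2) / 6)
      = Q * (if a = 3 then 1 else 0) + R * g3 i j + U * g3 k l := by
  have := h.eq g3 h3
  have ha' : a ≠ 0 := by omega
  have ha2 : g3 a 0 = if a = 3 then 1 else 0 := g3_zero a ha
  have hb2 : g3 0 b = - (b * (b - 1) * (b - 2) / 6) := by simp [g3]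
  have h00 : g3 0 0 = 0 := by simp [g3]
  rw [ha2, hb2, h00] at this
  linarith

/-- Conclusion. -/
def Concl (a b i j k l : ℕ) : Prop := a ≤ 5 ∧ b ≤ 5 ∧ i + j ≤ 5 ∧ k + l ≤ 5

/-- Two points on each axis. -/
lemma case_III (a b k l : ℕ) (Q P R U : ℚ) (ha : 1 ≤ a) (hb : 1 ≤ b) (hk : 1 ≤ k) (hl : 1 ≤ l)
    (h : Sys a b k 0 0 l Q P R U) (hne : b ≠ l) : False := by
  have t2 := h.T2 ha
  obtain ⟨hQ, hP, hR, hU, -⟩ := h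
  have e2 : g2 0 l = l * (l - 1) / 2 := by simp [g2]
  rw [g2_zero k hk, e2] at t2
  have n1 := mul_nonneg hP.le (tri_nonneg b)
  have n3 := mul_nonneg hU.le (tri_nonneg l)
  have n4 : 0 ≤ Q * (if a = 2 then 1 else 0) := by split_ifs <;> simp [hQ.le]
  have n5 : 0 ≤ R * (if k = 2 then 1 else 0) := by split_ifs <;> simp [hR.le]
  have : 2 ≤ b ∨ 2 ≤ l := by omega
  rcases this with h' | h'
  · have := mul_pos hP (lt_of_lt_of_le one_pos (tri_ge b h')); linarith
  · have := mul_pos hU (lt_of_lt_of_le one_pos (tri_ge l h')); linarith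

/-- Three points on one axis, one on the other. -/
lemma case_III_same (a b i k : ℕ) (Q P R U : ℚ) (ha : 1 ≤ a) (hb : 1 ≤ b) (hi : 1 ≤ i) (hk : 1 ≤ k)
    (h : Sys a b i 0 k 0 Q P R U) (hne : a ≠ k) : False := by
  have s2 := h.tr.T2 hb
  obtain ⟨hQ, hP, hR, hU, -⟩ := h
  have e1 : g2 0 i = i * (i - 1) / 2 := by simp [g2]
  have e2 : g2 0 k = k * (k - 1) / 2 := by simp [g2]
  rw [e1, e2] at s2
  have n1 := mul_nonneg hQ.le (tri_nonneg a)
  have n2 := mul_nonneg hR.le (tri_nonneg i)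
  have n3 := mul_nonneg hU.le (tri_nonneg k)
  have n4 : 0 ≤ P * (if b = 2 then 1 else 0) := by split_ifs <;> simp [hP.le]
  have : 2 ≤ a ∨ 2 ≤ k := by omega
  rcases this with h' | h'
  · have := mul_pos hQ (lt_of_lt_of_le one_pos (tri_ge a h')); linarith
  · have := mul_pos hU (lt_of_lt_of_le one_pos (tri_ge k h')); linarith

/-- Two points on the first axis, one interior point. -/
lemma case_II (a b i j k : ℕ) (Q P R U : ℚ) (ha : 1 ≤ a) (hb : 1 ≤ b) (hi : 1 ≤ i) (hj : 1 ≤ j)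
    (hk : 1 ≤ k) (h : Sys a b i j k 0 Q P R U) (hne : a ≠ k) : Concl a b i j k 0 := by
  have t0 := h.T0 ha
  have t1 := h.T1 ha
  have t2 := h.T2 ha
  have t3 := h.T3 ha
  have s0 := h.tr.T0 hb
  have s1 := h.tr.T1 hb
  have s2 := h.tr.T2 hb
  have s3 := h.tr.T3 hb
  obtain ⟨hQ, hP, hR, hU, -⟩ := h
  have hi0 : i ≠ 0 := by omega
  have hj0 : j ≠ 0 := by omega
  have hk0 : k ≠ 0 := by omega
  simp only [g0, hi0, hj0, hk0, if_true, if_false, mul_zero, add_zero] at t0 s0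
  have hP1 : P = 1 := t0.symm
  subst hP1
  have n1 := mul_nonneg hQ.le (tri_nonneg a)
  have n3 := mul_nonneg hU.le (tri_nonneg k)
  have n4 : (0:ℚ) ≤ (if b = 2 then 1 else 0) := by split_ifs <;> simp
  have hj1 : j = 1 := by
    by_contra hj1
    simp only [g2, hj0, hj1, if_true, if_false] at s2
    have n5 : (0:ℚ) ≤ R * (if j = 2 then 1 else 0) := by split_ifs <;> simp [hR.le]
    have : 2 ≤ a ∨ 2 ≤ k := by omega
    rcases this with h' | h'
    · have := mul_pos hQ (lt_of_lt_of_le one_pos (tri_ge a h')); linarith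
    · have := mul_pos hU (lt_of_lt_of_le one_pos (tri_ge k h')); linarith
  subst hj1
  have nb := tri_nonneg b
  have n6 : (0:ℚ) ≤ Q * (if a = 2 then 1 else 0) := by split_ifs <;> simp [hQ.le]
  have n7 : (0:ℚ) ≤ U * (if k = 2 then 1 else 0) := by split_ifs <;> simp [hU.le]
  have n8 : (0:ℚ) ≤ R * (if i = 2 then 1 else 0) := by split_ifs <;> simp [hR.le]
  have hg2k : g2 k 0 = if k = 2 then 1 else 0 := g2_zero k hk
  have hg3k : g3 k 0 = if k = 3 then 1 else 0 := g3_zero k hk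
  have hi1 : i = 1 := by
    by_contra hi1
    rw [hg2k] at t2
    simp only [g2, hi0, hi1, if_false] at t2
    have hb1 : b = 1 := by
      by_contra hb1
      have := tri_ge b (by omega)
      linarith
    subst hb1
    simp only [g1, hi0, hi1, hk0, if_false] at t1
    have : a ≠ 1 ∨ k ≠ 1 := by omega
    rcases this with h' | h'
    · simp only [h', if_false] at t1
      split_ifs at t1 <;> push_cast at t1 <;> linarith
    · simp only [h', if_false] at t1
      split_ifs at t1 <;> push_cast at t1 <;> linarith
  subst hi1
  rw [hg3k] at t3
  simp [g3] at t3 s3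
  have m1 := tet_nonneg a
  have m2 := tet_nonneg k
  have m3 := tet_nonneg b
  have mm1 := mul_nonneg hQ.le m1
  have mm2 := mul_nonneg hU.le m2
  have hb3 : b ≤ 3 := by
    by_contra hb3
    have := tet_ge b (by omega)
    split_ifs at t3 <;> linarith
  have ha3 : a ≤ 3 := by
    by_contra ha3
    have q1 := mul_pos hQ (lt_of_lt_of_le (by norm_num) (tet_ge a (by omega)))
    have hb3 : b = 3 := by
      by_contra hb3
      simp only [hb3, if_false] at s3
      linarith
    subst hb3
    rw [if_neg (by omega)] at t3
    split_ifs at t3 <;> push_cast at t3 <;> linarith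
  have hk3 : k ≤ 3 := by
    by_contra hk3
    have q1 := mul_pos hU (lt_of_lt_of_le (by norm_num) (tet_ge k (by omega)))
    have hb3 : b = 3 := by
      by_contra hb3
      simp only [hb3, if_false] at s3
      linarith
    subst hb3
    rw [if_neg (show k ≠ 3 by omega)] at t3
    split_ifs at t3 <;> push_cast at t3 <;> linarith
  unfold Concl; omega

/-- Interior points only: normalization. -/
lemma Sys.PQ {a b i j k l : ℕ} {Q P R U : ℚ} (h : Sys a b i j k l Q P R U) (ha : 1 ≤ a)
    (hi : 1 ≤ i) (hk : 1 ≤ k) : P = 1 := by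
  have := h.T0 ha
  have hi0 : i ≠ 0 := by omega
  have hk0 : k ≠ 0 := by omega
  simp [g0, hi0, hk0] at this
  exact this.symm

lemma Sys.half {a b i j k l : ℕ} {Q P R U : ℚ} (h : Sys a b i j k l Q P R U) :
    Q * (1 / 2) ^ a + P * (1 / 2) ^ b + R * (1 / 2) ^ (i + j) < 1 := by
  have := h.eq gh hh
  have p := mul_pos h.hU (show (0:ℚ) < (1 / 2) ^ (k + l) by positivity)
  simp only [gh] at this
  simp only [add_zero, zero_add, pow_zero] at this
  linarith


def e1 (n : ℕ) : ℚ := if n = 1 then 1 else 0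
def e2 (i j : ℕ) : ℚ := if i = 1 then -j else if i = 2 then 1 else 0
def e3 (i j : ℕ) : ℚ :=
  if i = 1 then j * (j - 1) / 2 else if i = 2 then -j else if i = 3 then 1 else 0

/-- Equations when two points are interior. -/
lemma Sys.int {a b i j k l : ℕ} {Q P R U : ℚ} (h : Sys a b i j k l Q P R U) (ha : 1 ≤ a)
    (hb : 1 ≤ b) (hi : 1 ≤ i) (hj : 1 ≤ j) (hk : 1 ≤ k) (hl : 1 ≤ l) :
    (b : ℚ) = e1 a + R * e1 i + U * e1 k ∧
    0 = (b * (b - 1) / 2 : ℚ) + (if a = 2 then 1 else 0) + R * e2 i j + U * e2 k l ∧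
    (b * (b - 1) * (b - 2) / 6 : ℚ) = (if a = 3 then 1 else 0) + R * e3 i j + U * e3 k l := by
  have hP := h.PQ ha hi hk
  have hQ := h.tr.PQ hb hj hl
  have t1 := h.T1 ha
  have t2 := h.T2 ha
  have t3 := h.T3 ha
  have hi0 : i ≠ 0 := by omega
  have hk0 : k ≠ 0 := by omega
  subst hP hQ
  simp only [g1, g2, g3, hi0, hk0, if_false, one_mul] at t1 t2 t3
  exact ⟨t1, t2, t3⟩

lemma case_I_a1 (b j k l : ℕ) (Q P R U : ℚ) (hb : 1 ≤ b) (hj : 1 ≤ j)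
    (hk : 1 ≤ k) (hl : 1 ≤ l) (h : Sys 1 b 1 j k l Q P R U) (hne : ¬ (k = 1 ∧ l = j)) :
    Concl 1 b 1 j k l := by
  obtain ⟨t1, t2, t3⟩ := h.int le_rfl hb le_rfl hj hk hl
  obtain ⟨s1, s2, s3⟩ := h.tr.int hb le_rfl hj le_rfl hl hk
  have hP := h.PQ le_rfl le_rfl hk
  have hQ := h.tr.PQ hb hj hl
  have hhf := h.half
  obtain ⟨-, -, hR, hU, -⟩ := h
  subst hP hQ
  have ek : e1 k = 0 ∨ e1 k = 1 := by unfold e1; split_ifs <;> simp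
  have hb2 : 2 ≤ b := by
    by_contra hb2
    have : b = 1 := by omega
    subst this
    have := mul_pos hR (show (0:ℚ) < (1 / 2) ^ (1 + j) by positivity)
    rw [pow_one] at hhf
    linarith
  have hbq : (2 : ℚ) ≤ b := by exact_mod_cast hb2
  have hb1 : b ≠ 1 := by omega
  by_cases hj1 : j = 1
  · subst hj1
    by_cases hk1 : k = 1
    · subst hk1
      have hl1 : l ≠ 1 := by omega
      simp [e1, e2, hl1, hb1] at t1 s1 t2 s2
      have hU2 : U = b - 2 := by linarith
      have hl2 : l = 2 := by
        by_contra hl2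
        simp [hl2, ← s1] at s2
        split_ifs at s2 with hb2
        · subst hb2; norm_num at hU2; linarith
        · linarith
      subst hl2
      simp [← s1] at s2
      have : (b : ℚ) ≤ 3 := by split_ifs at s2 <;> linarith
      have : b ≤ 3 := by exact_mod_cast this
      unfold Concl; omega
    · exfalso
      simp [e1, e2, hk1, hb1] at t1 s1 t2 s2
      have hl0 : (0 : ℚ) ≤ U * (if l = 1 then 1 else 0) := by split_ifs <;> simp [hU.le]
      have hbq2 : (b : ℚ) = 2 := by simp at hl0; linarith
      have : b = 2 := by exact_mod_cast hbq2
      subst this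
      have hR1 : R = 1 := by norm_num at t1; linarith
      subst hR1
      norm_num at hhf
  · have hl1 : l = 1 := by
      by_contra hl1
      simp [e1, hj1, hl1, hb1] at s1
    subst hl1
    simp [e1, hj1, hb1] at s1
    subst s1
    by_cases hk1 : k = 1
    · subst hk1
      simp [e1, e2, hj1, hb1] at t1 t2 s2
      have hb3 : b ≠ 2 := by
        rintro rfl
        norm_num at t1; linarith
      simp [hb3] at s2
      have hj2 : j = 2 := by
        by_contra hj2
        simp [hj2] at s2
        
      subst hj2
      simp at s2
      have : (b : ℚ) = 3 := by linarith
      have : b = 3 := by exact_mod_cast this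
      unfold Concl; omega
    · simp [e1, e2, hj1, hb1, hk1] at t1 t2 s2
      have hkq : (2 : ℚ) ≤ k := by exact_mod_cast (show 2 ≤ k by omega)
      have hj2 : j = 2 := by
        by_contra hj2
        simp [hj2] at s2
        split_ifs at s2 <;> linarith
      subst hj2
      simp at s2
      have hRb : R = b - 1 := by linarith
      subst hRb
      have hb4 : (b : ℚ) ≤ 4 := by
        by_contra hb4
        have hb4 : (4 : ℚ) < b := lt_of_not_ge hb4
        split_ifs at t2 <;> nlinarith
      have hb4' : b ≤ 4 := by exact_mod_cast hb4
      have : (k : ℚ) ≤ 4 := by split_ifs at s2 <;> linarith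
      have : k ≤ 4 := by exact_mod_cast this
      unfold Concl; omega

lemma case_I_11 (a b k l : ℕ) (Q P R U : ℚ) (ha : 2 ≤ a) (hb : 2 ≤ b)
    (hk : 1 ≤ k) (hl : 2 ≤ l) (h : Sys a b 1 1 k l Q P R U) :
    Concl a b 1 1 k l := by
  obtain ⟨t1, t2, t3⟩ := h.int (by omega) (by omega) le_rfl le_rfl (by omega) (by omega)
  obtain ⟨s1, s2, s3⟩ := h.tr.int (by omega) (by omega) le_rfl le_rfl (by omega) (by omega)
  have hP := h.PQ (by omega) le_rfl hk
  have hQ := h.tr.PQ (by omega) le_rfl (by omega)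
  have hhf := h.half
  obtain ⟨-, -, hR, hU, -⟩ := h
  subst hP hQ
  have haq : (2 : ℚ) ≤ a := by exact_mod_cast ha
  have hbq : (2 : ℚ) ≤ b := by exact_mod_cast hb
  have ha1 : a ≠ 1 := by omega
  have hb1 : b ≠ 1 := by omega
  have hl1 : l ≠ 1 := by omega
  simp [e1, e2, e3, ha1, hb1, hl1] at t1 s1 t2 s2 t3 s3
  have ul : (0 : ℚ) ≤ if l = 2 then U else 0 := by split_ifs <;> simp [hU.le]
  have ib : (0 : ℚ) ≤ if b = 2 then 1 else 0 := by split_ifs <;> simp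
  subst s1
  have ha3q : (a : ℚ) ≤ 3 := by nlinarith
  have ha3 : a ≤ 3 := by exact_mod_cast ha3q
  by_cases hk1 : k = 1
  · subst hk1
    simp at t1 t2 t3
    have hba : b ≠ a := by
      rintro rfl; linarith
    have hbaq : (a : ℚ) < b := by linarith
    interval_cases a
    · have hb2 : b ≠ 2 := hba
      simp [hb2] at s2
      split_ifs at s2 with hl2
      · have : (b : ℚ) = 3 := by push_cast at *; linarith
        have : b = 3 := by exact_mod_cast this
        unfold Concl; omega
      · norm_num at s2
    · norm_num at s2 s3 hbaq
      have hb2 : b ≠ 2 := by rintro rfl; norm_num at hbaq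
      have hl2 : l ≠ 2 := by
        rintro rfl
        simp [hb2] at s2; linarith
      simp [hba, hl2] at s3
      split_ifs at s3 with hl3
      · have : (b : ℚ) = 4 := by push_cast at *; linarith
        have : b = 4 := by exact_mod_cast this
        unfold Concl; omega
      · norm_num at s3
  · exfalso
    simp [hk1] at t1 t2 t3
    have hab : b = a := by exact_mod_cast t1
    subst hab
    interval_cases b <;> norm_num at hhf

lemma case_I_mixed (a b j k : ℕ) (Q P R U : ℚ) (ha : 2 ≤ a) (hb : 2 ≤ b)
    (hk : 2 ≤ k) (hj : 2 ≤ j) (h : Sys a b 1 j k 1 Q P R U) : k ≤ 3 := by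
  obtain ⟨t1, t2, t3⟩ := h.int (by omega) (by omega) le_rfl (by omega) (by omega) (by omega)
  obtain ⟨s1, s2, s3⟩ := h.tr.int (by omega) (by omega) (by omega) le_rfl (by omega) (by omega)
  by_contra hk3
  have haq : (2 : ℚ) ≤ a := by exact_mod_cast ha
  have hbq : (2 : ℚ) ≤ b := by exact_mod_cast hb
  have hkq : (4 : ℚ) ≤ k := by exact_mod_cast (show 4 ≤ k by omega)
  have hjq : (2 : ℚ) ≤ j := by exact_mod_cast hj
  have ha1 : a ≠ 1 := by omega
  have hb1 : b ≠ 1 := by omega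
  have hj1 : j ≠ 1 := by omega
  have hk1 : k ≠ 1 := by omega
  have hk2 : k ≠ 2 := by omega
  have hk3 : k ≠ 3 := by omega
  simp [e1, e2, e3, ha1, hb1, hj1, hk1, hk2, hk3] at t1 s1 t2 s2 t3 s3
  subst t1 s1
  by_cases ha2 : a = 2
  · subst ha2
    simp at t2 t3 s2 s3
    have hj2 : j = 2 := by
      by_contra hj2
      simp [hj2] at s2
      split_ifs at s2 <;> linarith
    subst hj2
    have : ((b : ℤ) : ℚ) * (b - 1) + 2 = 4 * b := by push_cast at *; linarith
    have h' : (b : ℤ) * (b - 1) + 2 = 4 * b := by exact_mod_cast this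
    have : b ≤ 5 := by by_contra hc; have : (6 : ℤ) ≤ b := by omega
                       nlinarith
    interval_cases b <;> omega
  · simp [ha2] at t2
    have hbj : (b : ℚ) = 2 * j + 1 := by
      have : (b : ℚ) * (b - 1 - 2 * j) = 0 := by linarith
      rcases mul_eq_zero.1 this with h' | h' <;> linarith
    rw [hbj] at t3
    have : (2 * (j:ℚ) + 1) * (j * (j + 1)) / 6 ≤ 1 := by
      split_ifs at t3 <;> linarith
    have h6 : (6 : ℚ) ≤ j * (j + 1) := by nlinarith
    nlinarith

lemma case_I_mixed_full (a b j k : ℕ) (Q P R U : ℚ) (ha : 2 ≤ a) (hb : 2 ≤ b)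
    (hk : 2 ≤ k) (hj : 2 ≤ j) (h : Sys a b 1 j k 1 Q P R U) : Concl a b 1 j k 1 := by
  have hk3 := case_I_mixed a b j k Q P R U ha hb hk hj h
  have hj3 := case_I_mixed b a k j P Q U R hb ha hj hk h.tr.swap
  obtain ⟨t1, t2, t3⟩ := h.int (by omega) (by omega) le_rfl (by omega) (by omega) (by omega)
  obtain ⟨s1, s2, s3⟩ := h.tr.int (by omega) (by omega) (by omega) le_rfl (by omega) (by omega)
  have haq : (2 : ℚ) ≤ a := by exact_mod_cast ha
  have hbq : (2 : ℚ) ≤ b := by exact_mod_cast hb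
  have ha1 : a ≠ 1 := by omega
  have hb1 : b ≠ 1 := by omega
  have hj1 : j ≠ 1 := by omega
  have hk1 : k ≠ 1 := by omega
  simp [e1, e2, e3, ha1, hb1, hj1, hk1] at t1 s1 t2 s2 t3 s3
  subst t1 s1
  have hb7 : b ≤ 7 := by
    have : (b : ℚ) ≤ 7 := by
      have hjq : (j : ℚ) ≤ 3 := by exact_mod_cast hj3
      have : (0 : ℚ) ≤ if a = 2 then 1 else 0 := by split_ifs <;> simp
      have : (0 : ℚ) ≤ if k = 2 then (a : ℚ) else 0 := by split_ifs <;> simp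
      nlinarith
    exact_mod_cast this
  have ha7 : a ≤ 7 := by
    have : (a : ℚ) ≤ 7 := by
      have hjq : (k : ℚ) ≤ 3 := by exact_mod_cast hk3
      have : (0 : ℚ) ≤ if b = 2 then 1 else 0 := by split_ifs <;> simp
      have : (0 : ℚ) ≤ if j = 2 then (b : ℚ) else 0 := by split_ifs <;> simp
      nlinarith
    exact_mod_cast this
  by_contra hc
  have hc' : 6 ≤ a ∨ 6 ≤ b := by unfold Concl at hc; omega
  clear hc haq hbq
  interval_cases j <;> interval_cases k <;> interval_cases b <;> interval_cases a <;>
    first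
    | omega
    | (exfalso; norm_num at t2; done)
    | (exfalso; norm_num at s2; done)
    | (exfalso; norm_num at t3; done)

/-- Both remaining points interior, r has first coordinate one. -/
lemma Concl.swap {a b i j k l : ℕ} (h : Concl a b k l i j) : Concl a b i j k l := by
  unfold Concl at *; omega
lemma Concl.tr {a b i j k l : ℕ} (h : Concl b a j i l k) : Concl a b i j k l := by
  unfold Concl at *; omega

lemma case_I_i1 (a b j k l : ℕ) (Q P R U : ℚ) (ha : 2 ≤ a) (hb : 2 ≤ b) (hj : 1 ≤ j)
    (hk : 1 ≤ k) (hl : 1 ≤ l) (h : Sys a b 1 j k l Q P R U) (hne : ¬ (k = 1 ∧ l = j)) :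
    Concl a b 1 j k l := by
  by_cases hj1 : j = 1
  · subst hj1
    by_cases hl2 : 2 ≤ l
    · exact case_I_11 a b k l Q P R U ha hb hk hl2 h
    · exact Concl.tr (case_I_11 b a l k P Q R U hb ha hl (by omega) h.tr)
  · have hl1 : l = 1 := by
      by_contra hl1
      obtain ⟨s1, -, -⟩ := h.tr.int (by omega) (by omega) (by omega) le_rfl (by omega) (by omega)
      have hb1 : b ≠ 1 := by omega
      simp [e1, hj1, hl1, hb1] at s1
      omega
    subst hl1
    by_cases hk1 : k = 1
    · subst hk1
      exact Concl.swap (case_I_11 a b 1 j Q P U R ha hb le_rfl (by omega) h.swap)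
    · exact case_I_mixed_full a b j k Q P R U ha hb (by omega) (by omega) h

lemma exists_i1 (a b i j k l : ℕ) (Q P R U : ℚ) (ha : 1 ≤ a) (hb : 1 ≤ b) (hi : 1 ≤ i)
    (hj : 1 ≤ j) (hk : 1 ≤ k) (hl : 1 ≤ l) (h : Sys a b i j k l Q P R U) : i = 1 ∨ k = 1 := by
  by_contra hc
  push Not at hc
  obtain ⟨t1, -, -⟩ := h.int ha hb hi hj hk hl
  have hP := h.PQ ha hi hk
  have hQ := h.tr.PQ hb hj hl
  have hhf := h.half
  obtain ⟨-, -, hR, hU, -⟩ := h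
  subst hP hQ
  simp [e1, hc.1, hc.2] at t1
  split_ifs at t1 with ha1
  · have : b = 1 := by exact_mod_cast t1
    subst this ha1
    have := mul_pos hR (show (0:ℚ) < (1 / 2) ^ (i + j) by positivity)
    rw [pow_one] at hhf
    linarith
  · have : b = 0 := by exact_mod_cast t1
    omega

lemma case_I_first (a b j k l : ℕ) (Q P R U : ℚ) (ha : 1 ≤ a) (hb : 2 ≤ b)
    (hj : 1 ≤ j) (hk : 1 ≤ k) (hl : 1 ≤ l) (h : Sys a b 1 j k l Q P R U)
    (hne : ¬ (k = 1 ∧ l = j)) : Concl a b 1 j k l := by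
  by_cases ha1 : a = 1
  · subst ha1
    exact case_I_a1 b j k l Q P R U (by omega) hj hk hl h hne
  · exact case_I_i1 a b j k l Q P R U (by omega) hb hj hk hl h hne

lemma case_I_second (a b i j k l : ℕ) (Q P R U : ℚ) (ha : 1 ≤ a) (hb : 2 ≤ b) (hi : 1 ≤ i)
    (hj : 1 ≤ j) (hk : 1 ≤ k) (hl : 1 ≤ l) (h : Sys a b i j k l Q P R U)
    (hne : ¬ (k = i ∧ l = j)) : Concl a b i j k l := by
  rcases exists_i1 a b i j k l Q P R U ha (by omega) hi hj hk hl h with rfl | rfl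
  · exact case_I_first a b j k l Q P R U ha hb hj hk hl h hne
  · exact Concl.swap (case_I_first a b l i j Q P U R ha hb hl hi hj h.swap (by omega))

lemma case_I (a b i j k l : ℕ) (Q P R U : ℚ) (ha : 1 ≤ a) (hb : 1 ≤ b) (hi : 1 ≤ i)
    (hj : 1 ≤ j) (hk : 1 ≤ k) (hl : 1 ≤ l) (h : Sys a b i j k l Q P R U)
    (hne : ¬ (k = i ∧ l = j)) : Concl a b i j k l := by
  by_cases hb2 : 2 ≤ b
  · exact case_I_second a b i j k l Q P R U ha hb2 hi hj hk hl h hne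
  · by_cases ha2 : 2 ≤ a
    · exact Concl.tr (case_I_second b a j i l k P Q R U hb ha2 hj hi hl hk h.tr (by omega))
    · exfalso
      have hP := h.PQ ha hi hk
      have hQ := h.tr.PQ hb hj hl
      have hhf := h.half
      have : a = 1 := by omega
      have : b = 1 := by omega
      subst a b hP hQ
      have := mul_pos h.hR (show (0:ℚ) < (1 / 2) ^ (i + j) by positivity)
      rw [pow_one] at hhf
      linarith

/-- One of the remaining points on an axis. -/
lemma case_axis (a b i j k : ℕ) (Q P R U : ℚ) (ha : 1 ≤ a) (hb : 1 ≤ b)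
    (hij : ¬ (i = 0 ∧ j = 0)) (hk : 1 ≤ k) (h : Sys a b i j k 0 Q P R U)
    (h1 : a ≠ k) (h2 : ¬ (i = 0 ∧ j = b)) : Concl a b i j k 0 := by
  rcases Nat.eq_zero_or_pos i with rfl | hi
  · exact (case_III a b k j Q P U R ha hb hk (by omega) h.swap (by omega)).elim
  · rcases Nat.eq_zero_or_pos j with rfl | hj
    · exact (case_III_same a b i k Q P R U ha hb hi hk h h1).elim
    · exact case_II a b i j k Q P R U ha hb hi hj hk h h1

lemma core (a b i j k l : ℕ) (Q P R U : ℚ) (ha : 1 ≤ a) (hb : 1 ≤ b)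
    (hij : ¬ (i = 0 ∧ j = 0)) (hkl : ¬ (k = 0 ∧ l = 0))
    (h : Sys a b i j k l Q P R U) (hne : ¬ (k = i ∧ l = j))
    (ra : ¬ (i = a ∧ j = 0)) (rb : ¬ (i = 0 ∧ j = b))
    (sa : ¬ (k = a ∧ l = 0)) (sb : ¬ (k = 0 ∧ l = b)) : Concl a b i j k l := by
  rcases Nat.eq_zero_or_pos l with rfl | hl
  · exact case_axis a b i j k Q P R U ha hb hij (by omega) h (by omega) rb
  rcases Nat.eq_zero_or_pos k with rfl | hk
  · exact Concl.tr (case_axis b a j i l P Q R U hb ha (by omega) hl h.tr (by omega) (by omega))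
  rcases Nat.eq_zero_or_pos j with rfl | hj
  · exact Concl.swap (case_axis a b k l i Q P U R ha hb hkl (by omega) h.swap (by omega) sb)
  rcases Nat.eq_zero_or_pos i with rfl | hi
  · exact Concl.swap (Concl.tr
      (case_axis b a l k j P Q U R hb ha (by omega) hj h.swap.tr (by omega) (by omega)))
  exact case_I a b i j k l Q P R U ha hb hi hj hk hl h hne

theorem stmt_1 (w : (ℕ × ℕ) →₀ ℤ) (hw : IsOutcome w) (hv : IsValid w)
    (hcard : {p : ℕ × ℕ | 0 < w p}.ncard = 4) :
    ∀ p : ℕ × ℕ, w p ≠ 0 → p.1 + p.2 ≤ 5 := by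
  classical
  set S : Finset (ℕ × ℕ) := w.support.filter (fun p => 0 < w p) with hS
  have memS : ∀ p, p ∈ S ↔ 0 < w p := by
    intro p
    simp only [hS, Finset.mem_filter, Finsupp.mem_support_iff]
    constructor
    · exact fun h => h.2
    · exact fun h => ⟨by omega, h⟩
  have hScard : S.card = 4 := by
    rw [← hcard, ← Set.ncard_coe_finset]
    congr 1
    ext p
    simpa using memS p
  -- the origin is not positive
  have hsum : ∀ f, Harm f → ∑ p ∈ w.support, (w p : ℚ) * f p.1 p.2 = 0 :=
    fun f hf => outcome_sum w hw f hf
  have ghpos : ∀ i j, 0 < gh i j := fun i j => by unfold gh; positivity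
  obtain ⟨p0, hp0⟩ : S.Nonempty := by rw [← Finset.card_pos, hScard]; norm_num
  have horig : ¬ 0 < w (0, 0) := by
    intro h
    have hnn : ∀ p, 0 ≤ w p := by
      intro p
      by_contra hp
      have hp' : w p < 0 := by omega
      have := hv p hp'
      subst this
      omega
    have hs := hsum gh hh
    have : 0 < ∑ p ∈ w.support, (w p : ℚ) * gh p.1 p.2 := by
      apply Finset.sum_pos
      · intro p hp
        have h1 := hnn p
        have h2 : w p ≠ 0 := by simpa using hp
        have h3 : 0 < w p := by omega
        exact mul_pos (by exact_mod_cast h3) (ghpos _ _)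
      · exact ⟨(0, 0), by simp; omega⟩
    linarith
  have h0S : (0, 0) ∉ S := by rw [memS]; exact horig
  set c : ℚ := -(w (0, 0) : ℚ) with hc
  have hsum' : ∀ f, Harm f → ∑ p ∈ S, (w p : ℚ) * f p.1 p.2 = c * f 0 0 := by
    intro f hf
    have h := hsum f hf
    have hsub : w.support ⊆ insert (0, 0) S := by
      intro p hp
      have h2 : w p ≠ 0 := by simpa using hp
      rw [Finset.mem_insert, memS]
      by_cases hp' : w p < 0
      · left; exact hv p hp'
      · right; omega
    rw [Finset.sum_subset hsub] at h
    · rw [Finset.sum_insert h0S] at h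
      simp only [hc]
      simp only at h
      linarith
    · intro p _ hp
      have : w p = 0 := by simpa using hp
      simp [this]
  have hpos : ∀ p ∈ S, (0 : ℚ) < w p := by
    intro p hp
    exact_mod_cast (memS p).1 hp
  have hcpos : 0 < c := by
    have h := hsum' gh hh
    have : 0 < ∑ p ∈ S, (w p : ℚ) * gh p.1 p.2 :=
      Finset.sum_pos (fun p hp => mul_pos (hpos p hp) (ghpos _ _)) ⟨p0, hp0⟩
    rw [h] at this
    simpa [gh] using this
  have exB : ∃ p ∈ S, p.1 = 0 := by
    by_contra hno
    push Not at hno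
    have h := hsum' g0 h0
    rw [Finset.sum_eq_zero] at h
    · simp [g0] at h; linarith
    · intro p hp
      simp [g0, hno p hp]
  have exA : ∃ p ∈ S, p.2 = 0 := by
    by_contra hno
    push Not at hno
    have h := hsum' _ (harm_swap h0)
    rw [Finset.sum_eq_zero] at h
    · simp [g0] at h; linarith
    · intro p hp
      simp [g0, hno p hp]
  obtain ⟨⟨x, b⟩, hB, hx⟩ := exB
  obtain ⟨⟨a, y⟩, hA, hy⟩ := exA
  simp only at hx hy
  subst hx hy
  have hb : 1 ≤ b := by
    rcases Nat.eq_zero_or_pos b with rfl | h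
    · exact (h0S hB).elim
    · exact h
  have ha : 1 ≤ a := by
    rcases Nat.eq_zero_or_pos a with rfl | h
    · exact (h0S hA).elim
    · exact h
  have hAB : ((a, 0) : ℕ × ℕ) ∈ S.erase (0, b) := by
    rw [Finset.mem_erase]
    refine ⟨?_, hA⟩
    simp; omega
  have hc2 : ((S.erase (0, b)).erase (a, 0)).card = 2 := by
    rw [Finset.card_erase_of_mem hAB, Finset.card_erase_of_mem hB, hScard]
  obtain ⟨⟨i, j⟩, ⟨k, l⟩, hrs, hset⟩ := Finset.card_eq_two.1 hc2
  have hr : ((i, j) : ℕ × ℕ) ∈ (S.erase (0, b)).erase (a, 0) := by rw [hset]; simp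
  have hs : ((k, l) : ℕ × ℕ) ∈ (S.erase (0, b)).erase (a, 0) := by rw [hset]; simp
  have hr' := hr
  have hs' := hs
  simp only [Finset.mem_erase, ne_eq, Prod.mk.injEq] at hr' hs'
  have hdec : ∀ F : ℕ × ℕ → ℚ, ∑ p ∈ S, F p = F (a, 0) + F (0, b) + F (i, j) + F (k, l) := by
    intro F
    rw [← Finset.add_sum_erase S F hB, ← Finset.add_sum_erase _ F hAB, hset,
      Finset.sum_pair hrs]
    ring
  have hsys : Sys a b i j k l (w (a, 0) / c) (w (0, b) / c) (w (i, j) / c) (w (k, l) / c) := by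
    refine ⟨div_pos (hpos _ hA) hcpos, div_pos (hpos _ hB) hcpos,
      div_pos (hpos _ hr'.2.2) hcpos, div_pos (hpos _ hs'.2.2) hcpos, ?_⟩
    intro f hf
    have h := hsum' f hf
    rw [hdec] at h
    simp only at h
    have hc0 : c ≠ 0 := hcpos.ne'
    field_simp
    linarith
  have ne0 : ∀ p q : ℕ, (p, q) ∈ S → ¬ (p = 0 ∧ q = 0) := by
    rintro p q hpq ⟨rfl, rfl⟩
    exact h0S hpq
  have hconc := core a b i j k l _ _ _ _ ha hb (ne0 _ _ hr'.2.2) (ne0 _ _ hs'.2.2) hsys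
    (by simp only [ne_eq, Prod.mk.injEq] at hrs; omega) hr'.1 hr'.2.1 hs'.1 hs'.2.1
  obtain ⟨c1, c2, c3, c4⟩ := hconc
  intro p hp
  by_cases hpneg : w p < 0
  · rw [hv p hpneg]; simp
  · have hpS : p ∈ S := by rw [memS]; omega
    by_cases hpB : p = (0, b)
    · subst hpB; simpa using c2
    by_cases hpA : p = (a, 0)
    · subst hpA; simpa using c1
    have : p ∈ (S.erase (0, b)).erase (a, 0) := by
      simp only [Finset.mem_erase]; exact ⟨hpA, hpB, hpS⟩
    rw [hset] at this
    simp only [Finset.mem_insert, Finset.mem_singleton] at this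
    rcases this with rfl | rfl
    · exact c3
    · exact c4
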